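/- For every integer n ≥ 1, every nonnegative integer d, and every Laurent polynomial f ∈ ℂ[y_i^{±1} : 1 ≤ i ≤ n] such that (y_1⋯y_n)^d · f(y) is a polynomial, the integral S_n[f](α,β,γ) converges absolutely for every (α,β,γ) in the open set D_d = {(α,β,γ) ∈ ℂ³ : Re α > d−1, Re β > −1, Re γ > 0}, and the function (α,β,γ) ↦ S_n[f](α,β,γ) is analytic (holomorphic in the three complex variables) on D_d. -/

import Mathlib

open MeasureTheory Complex

noncomputable section

/-- The open ordered simplex `Δ_n = {y : 1 > y_1 > ⋯ > y_n > 0}`. -/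
def orderedSimplex (n : ℕ) : Set (Fin n → ℝ) :=
  {y | (∀ i, 0 < y i ∧ y i < 1) ∧ ∀ i j : Fin n, i < j → y j < y i}

/-- Evaluation of the Laurent polynomial with coefficient family `c` at a real point. -/
def laurentEval {n : ℕ} (c : (Fin n → ℤ) →₀ ℂ) (y : Fin n → ℝ) : ℂ :=
  c.sum fun k a => a * ∏ i, ((y i : ℂ)) ^ (k i)

/-- The Selberg integrand `∏ y_i^α (1-y_i)^β ∏_{i<j} (y_i-y_j)^{2γ} · f(y)`. -/
def selbergIntegrand (n : ℕ) (f : (Fin n → ℝ) → ℂ) (α β γ : ℂ) (y : Fin n → ℝ) : ℂ :=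
  (∏ i, ((y i : ℂ) ^ α * (((1 - y i : ℝ)) : ℂ) ^ β)) *
    (∏ i : Fin n, ∏ j : Fin n,
      if i < j then (((y i - y j : ℝ)) : ℂ) ^ (2 * γ) else 1) * f y

/-- The Selberg integral `S_n[f](α,β,γ)`. -/
def selbergS (n : ℕ) (f : (Fin n → ℝ) → ℂ) (α β γ : ℂ) : ℂ :=
  ∫ y in orderedSimplex n, selbergIntegrand n f α β γ y

/-- The domain `D_d = {Re α > d−1, Re β > −1, Re γ > 0}`. -/
def domainD (d : ℕ) : Set (ℂ × ℂ × ℂ) :=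
  {p | (d : ℝ) - 1 < p.1.re ∧ -1 < p.2.1.re ∧ 0 < p.2.2.re}

/-!
On the simplex the integrand is `f y * exp (L y p)`, where `L y` is a linear form in `p = (α, β, γ)`
whose coefficients are sums of logarithms of numbers in `(0, 1)`, hence nonpositive.

For `Re γ ≥ 0` the factors `(y_i - y_j) ^ (2γ)` have norm at most `1`, so a bound
`‖f y‖ ≤ C * ∏ y_i ^ (-d)` makes the integrand dominated by a product of one-variable beta
integrands.

Moreover `r * ‖L y‖ ≤ -Re (L y (r, r, r))`, so `‖f y * exp (L y p)‖ * exp (r * ‖L y‖)` is at most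
the norm of the integrand at `p - (r, r, r)`, which is integrable for small `r` because the domain
is open. This is the domination needed to integrate the exponential series
`exp (L y (p + h)) = exp (L y p) * ∑ (L y h) ^ k / k!` term by term for `‖h‖ < r`.
-/

open scoped NNReal ENNReal Topology

section PowerSeriesIntegral

variable {𝕜 E F G : Type*} [NormedAddCommGroup E] [NormedAddCommGroup F] [NormedAddCommGroup G]

theorem continuous_compContinuousLinearMap_apply [NontriviallyNormedField 𝕜] [NormedSpace 𝕜 E]
    [NormedSpace 𝕜 F] [NormedSpace 𝕜 G] (P : FormalMultilinearSeries 𝕜 F G) (k : ℕ) :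
    Continuous fun u : E →L[𝕜] F => P.compContinuousLinearMap u k := by
  have hcomp := (ContinuousMultilinearMap.compContinuousLinearMapContinuousMultilinear 𝕜
    (fun _ : Fin k => E) (fun _ : Fin k => F) G).cont
  have hdiag : Continuous fun (u : E →L[𝕜] F) (_ : Fin k) => u := by fun_prop
  exact (hcomp.comp hdiag).clm_apply continuous_const

variable {Y : Type*} [MeasurableSpace Y] {μ : Measure Y}

theorem integrable_of_norm_mul_le {g : Y → G} {B : Y → ℝ} {c : ℝ} (hc : 0 < c)
    (hg : AEStronglyMeasurable g μ) (hB : Integrable B μ) (hgB : ∀ᵐ y ∂μ, ‖g y‖ * c ≤ B y) :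
    Integrable g μ := by
  refine (hB.mul_const c⁻¹).mono' hg ?_
  filter_upwards [hgB] with y hy
  rwa [← div_eq_mul_inv, le_div_iff₀ hc]

variable [RCLike 𝕜] [NormedSpace 𝕜 E] [NormedSpace ℝ G] [NormedSpace 𝕜 G]

theorem hasFPowerSeriesOnBall_integral_of_dominated {f : Y → E → G}
    {P : Y → FormalMultilinearSeries 𝕜 E G} {x : E} {r : ℝ≥0} {b : ℕ → Y → ℝ} {B : Y → ℝ}
    (hr : 0 < r) (hP : ∀ k, AEStronglyMeasurable (fun y => P y k) μ)
    (hPb : ∀ k, ∀ᵐ y ∂μ, ‖P y k‖ * r ^ k ≤ b k y)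
    (hbB : ∀ᵐ y ∂μ, HasSum (fun k => b k y) (B y)) (hB : Integrable B μ)
    (hf : ∀ᵐ y ∂μ, HasFPowerSeriesOnBall (f y) (P y) x r) :
    HasFPowerSeriesOnBall (fun z => ∫ y, f y z ∂μ) (fun k => ∫ y, P y k ∂μ) x r := by
  have hPB (k : ℕ) : ∀ᵐ y ∂μ, ‖P y k‖ * r ^ k ≤ B y := by
    filter_upwards [ae_all_iff.2 hPb, hbB] with y hb hsum
    exact (hb k).trans <| le_hasSum hsum k fun j _ => le_trans (by positivity) (hb j)
  have hPint (k : ℕ) : Integrable (fun y => P y k) μ :=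
    integrable_of_norm_mul_le (by positivity) (hP k) hB (hPB k)
  refine ⟨FormalMultilinearSeries.le_radius_of_bound _ (∫ y, B y ∂μ) fun k => ?_,
    by exact_mod_cast hr, fun {h} hh => ?_⟩
  · calc ‖∫ y, P y k ∂μ‖ * (r : ℝ) ^ k
        ≤ (∫ y, ‖P y k‖ ∂μ) * (r : ℝ) ^ k := by gcongr; exact norm_integral_le_integral_norm _
      _ = ∫ y, ‖P y k‖ * (r : ℝ) ^ k ∂μ := (integral_mul_const _ _).symm
      _ ≤ ∫ y, B y ∂μ := integral_mono_ae ((hPint k).norm.mul_const _) hB (hPB k)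
  · have hhr : ‖h‖ ≤ r := by
      rw [Metric.mem_eball, edist_zero_right] at hh
      exact_mod_cast hh.le
    simp only [ContinuousMultilinearMap.integral_apply (hPint _)]
    refine hasSum_integral_of_dominated_convergence b
      (fun k => (ContinuousMultilinearMap.apply 𝕜 _ G fun _ => h).continuous
        |>.comp_aestronglyMeasurable (hP k)) (fun k => ?_)
      (hbB.mono fun _ hsum => hsum.summable)
      (hB.congr (hbB.mono fun _ hsum => hsum.tsum_eq.symm)) (hf.mono fun _ hy => hy.hasSum hh)
    filter_upwards [hPb k] with y hy
    calc ‖P y k fun _ => h‖ ≤ ‖P y k‖ * ‖h‖ ^ k := by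
          simpa using (P y k).le_opNorm fun _ => h
      _ ≤ ‖P y k‖ * r ^ k := by gcongr
      _ ≤ b k y := hy

end PowerSeriesIntegral

section ExponentialIntegral

variable {E : Type*} [NormedAddCommGroup E] [NormedSpace ℂ E]

theorem hasFPowerSeriesOnBall_cexp_comp (L : E →L[ℂ] ℂ) :
    HasFPowerSeriesOnBall (fun h => exp (L h))
      ((NormedSpace.expSeries ℂ ℂ).compContinuousLinearMap L) 0 ∞ := by
  have hexp : HasFPowerSeriesOnBall exp (NormedSpace.expSeries ℂ ℂ) (L 0) ∞ := by
    rw [map_zero, Complex.exp_eq_exp_ℂ]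
    exact NormedSpace.exp_hasFPowerSeriesOnBall
  simpa only [ENNReal.top_div_of_ne_top enorm_ne_top, Function.comp_def]
    using hexp.compContinuousLinearMap

theorem norm_expSeries_compContinuousLinearMap_le (L : E →L[ℂ] ℂ) (k : ℕ) :
    ‖(NormedSpace.expSeries ℂ ℂ).compContinuousLinearMap L k‖ ≤ ‖L‖ ^ k / k.factorial := by
  refine (FormalMultilinearSeries.norm_compContinuousLinearMap_le _ L k).trans_eq ?_
  simp only [NormedSpace.expSeries, norm_smul, norm_inv, Complex.norm_natCast,
    ContinuousMultilinearMap.norm_mkPiAlgebraFin]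
  ring

variable {Y : Type*} [MeasurableSpace Y] {μ : Measure Y}

theorem aestronglyMeasurable_cexp_apply {L : Y → E →L[ℂ] ℂ} (hL : AEStronglyMeasurable L μ)
    (p : E) : AEStronglyMeasurable (fun y => exp (L y p)) μ :=
  (show Continuous fun l : E →L[ℂ] ℂ => exp (l p) by fun_prop).comp_aestronglyMeasurable hL

theorem analyticAt_integral_mul_cexp {F : Y → ℂ} {L : Y → E →L[ℂ] ℂ} {p : E} {r : ℝ≥0}
    (hr : 0 < r) (hF : AEStronglyMeasurable F μ) (hL : AEStronglyMeasurable L μ)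
    (hint : Integrable (fun y => ‖F y * exp (L y p)‖ * Real.exp (r * ‖L y‖)) μ) :
    AnalyticAt ℂ (fun q => ∫ y, F y * exp (L y q) ∂μ) p := by
  have hseries (y : Y) : HasFPowerSeriesOnBall (fun q => F y * exp (L y q))
      ((F y * exp (L y p)) • (NormedSpace.expSeries ℂ ℂ).compContinuousLinearMap (L y)) p r := by
    have hshift := ((hasFPowerSeriesOnBall_cexp_comp (L y)).const_smul
      (c := F y * exp (L y p))).comp_sub p
    rw [zero_add] at hshift
    refine (hshift.mono (by exact_mod_cast hr) le_top).congr fun q _ => ?_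
    simp only [Pi.smul_apply, smul_eq_mul, map_sub]
    rw [mul_assoc, ← Complex.exp_add, add_sub_cancel]
  refine (hasFPowerSeriesOnBall_integral_of_dominated
    (b := fun k y => ‖F y * exp (L y p)‖ * ((r * ‖L y‖) ^ k / k.factorial)) hr (fun k => ?_)
    (fun k => .of_forall fun y => ?_) (.of_forall fun y => ?_) hint
    (.of_forall hseries)).analyticAt
  · exact (hF.mul (aestronglyMeasurable_cexp_apply hL p)).smul
      ((continuous_compContinuousLinearMap_apply _ k).comp_aestronglyMeasurable hL)
  · rw [mul_pow, FormalMultilinearSeries.smul_apply, norm_smul, mul_comm ((r : ℝ) ^ k),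
      mul_div_right_comm, ← mul_assoc]
    gcongr
    exact norm_expSeries_compContinuousLinearMap_le (L y) k
  · rw [Real.exp_eq_exp_ℝ]
    exact (NormedSpace.expSeries_div_hasSum_exp (r * ‖L y‖)).mul_left _

end ExponentialIntegral

section Simplex

variable {n : ℕ} {y : Fin n → ℝ}

theorem measurableSet_orderedSimplex (n : ℕ) : MeasurableSet (orderedSimplex n) := by
  unfold orderedSimplex
  measurability

theorem orderedSimplex_subset_unitCube (n : ℕ) :
    orderedSimplex n ⊆ Set.univ.pi fun _ => Set.Ioo 0 1 :=
  fun _ hy i _ => hy.1 i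

theorem sub_mem_Ioo_of_mem_orderedSimplex (hy : y ∈ orderedSimplex n) {i j : Fin n} (hij : i < j) :
    y i - y j ∈ Set.Ioo (0 : ℝ) 1 :=
  ⟨sub_pos.2 (hy.2 i j hij), by linarith [(hy.1 i).2, (hy.1 j).1]⟩

end Simplex

section Integrability

variable {n : ℕ} {s C : ℝ} {f : (Fin n → ℝ) → ℂ} {α β γ : ℂ} {y : Fin n → ℝ}

theorem integrableOn_rpow_mul_one_sub_rpow {a b : ℝ} (ha : -1 < a) (hb : -1 < b) :
    IntegrableOn (fun x : ℝ => x ^ a * (1 - x) ^ b) (Set.Ioo 0 1) := by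
  have hbeta := betaIntegral_convergent (u := (a + 1 : ℝ)) (v := (b + 1 : ℝ))
    (by rw [ofReal_re]; linarith) (by rw [ofReal_re]; linarith)
  rw [intervalIntegrable_iff_integrableOn_Ioo_of_le zero_le_one] at hbeta
  refine IntegrableOn.congr_fun hbeta.norm (fun x hx => ?_) measurableSet_Ioo
  have hcast : (1 : ℂ) - x = (1 - x : ℝ) := by push_cast; rfl
  rw [norm_mul, hcast, norm_cpow_eq_rpow_re_of_pos hx.1,
    norm_cpow_eq_rpow_re_of_pos (sub_pos.2 hx.2)]
  simp

theorem norm_prod_sub_cpow_le_one (hγ : 0 ≤ γ.re) (hy : y ∈ orderedSimplex n) :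
    ‖∏ i : Fin n, ∏ j : Fin n,
      if i < j then (((y i - y j : ℝ)) : ℂ) ^ (2 * γ) else 1‖ ≤ 1 := by
  simp only [norm_prod]
  refine Finset.prod_le_one (fun _ _ => by positivity) fun i _ =>
    Finset.prod_le_one (fun _ _ => by positivity) fun j _ => ?_
  split_ifs with hij
  · have hsub := sub_mem_Ioo_of_mem_orderedSimplex hy hij
    rw [norm_cpow_eq_rpow_re_of_pos hsub.1]
    exact Real.rpow_le_one hsub.1.le hsub.2.le (by simpa using hγ)
  · exact norm_one.le

theorem norm_selbergIntegrand_le (hf : ‖f y‖ ≤ C * ∏ i, y i ^ (-s)) (hγ : 0 ≤ γ.re)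
    (hy : y ∈ orderedSimplex n) :
    ‖selbergIntegrand n f α β γ y‖ ≤ C * ∏ i, (y i ^ (α.re - s) * (1 - y i) ^ β.re) := by
  have hnorm (i : Fin n) :
      ‖(y i : ℂ) ^ α * ((1 - y i : ℝ) : ℂ) ^ β‖ = y i ^ α.re * (1 - y i) ^ β.re := by
    rw [norm_mul, norm_cpow_eq_rpow_re_of_pos (hy.1 i).1,
      norm_cpow_eq_rpow_re_of_pos (sub_pos.2 (hy.1 i).2)]
  calc ‖selbergIntegrand n f α β γ y‖
      ≤ (∏ i, y i ^ α.re * (1 - y i) ^ β.re) * 1 * (C * ∏ i, y i ^ (-s)) := by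
        rw [selbergIntegrand, norm_mul, norm_mul, norm_prod,
          Finset.prod_congr rfl fun i _ => hnorm i]
        have hpos : 0 ≤ ∏ i, y i ^ α.re * (1 - y i) ^ β.re :=
          Finset.prod_nonneg fun i _ => hnorm i ▸ norm_nonneg _
        gcongr
        exact norm_prod_sub_cpow_le_one hγ hy
    _ = C * ∏ i, (y i ^ (α.re - s) * (1 - y i) ^ β.re) := by
        rw [mul_one, mul_left_comm, ← Finset.prod_mul_distrib]
        congr 1
        refine Finset.prod_congr rfl fun i _ => ?_
        rw [sub_eq_add_neg α.re, Real.rpow_add (hy.1 i).1]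
        ring

theorem aestronglyMeasurable_selbergIntegrand {μ : Measure (Fin n → ℝ)}
    (hf : AEStronglyMeasurable f μ) (α β γ : ℂ) :
    AEStronglyMeasurable (selbergIntegrand n f α β γ) μ := by
  have hweight : Measurable fun y : Fin n → ℝ =>
      (∏ i, ((y i : ℂ) ^ α * (((1 - y i : ℝ)) : ℂ) ^ β)) *
        ∏ i : Fin n, ∏ j : Fin n, if i < j then (((y i - y j : ℝ)) : ℂ) ^ (2 * γ) else 1 := by
    refine Measurable.mul (by fun_prop) <| Finset.measurable_fun_prod _ fun i _ =>
      Finset.measurable_fun_prod _ fun j _ => ?_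
    split_ifs <;> fun_prop
  exact hweight.aestronglyMeasurable.mul hf

theorem integrableOn_selbergIntegrand
    (hf : AEStronglyMeasurable f (volume.restrict (orderedSimplex n)))
    (hfC : ∀ y ∈ orderedSimplex n, ‖f y‖ ≤ C * ∏ i, y i ^ (-s))
    (hα : s - 1 < α.re) (hβ : -1 < β.re) (hγ : 0 ≤ γ.re) :
    IntegrableOn (selbergIntegrand n f α β γ) (orderedSimplex n) := by
  have hcube : IntegrableOn (fun y : Fin n → ℝ => ∏ i, (y i ^ (α.re - s) * (1 - y i) ^ β.re))
      (Set.univ.pi fun _ => Set.Ioo 0 1) := by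
    rw [IntegrableOn, volume_pi, Measure.restrict_pi_pi]
    exact Integrable.fintype_prod fun _ =>
      integrableOn_rpow_mul_one_sub_rpow (by linarith) hβ
  refine Integrable.mono' ((hcube.mono_set (orderedSimplex_subset_unitCube n)).const_mul C)
    (aestronglyMeasurable_selbergIntegrand hf α β γ) ?_
  filter_upwards [ae_restrict_mem (measurableSet_orderedSimplex n)] with y hy
  exact norm_selbergIntegrand_le (hfC y hy) hγ hy

end Integrability

section ExponentialForm

variable {n : ℕ} {y : Fin n → ℝ}

/-- The linear form `(α, β, γ) ↦ w₁ α + w₂ β + w₃ γ` with real coefficients `w`. -/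
def realForm (w : ℝ × ℝ × ℝ) : (ℂ × ℂ × ℂ) →L[ℂ] ℂ :=
  (w.1 : ℂ) • .fst ℂ ℂ (ℂ × ℂ) + (w.2.1 : ℂ) • (.fst ℂ ℂ ℂ ∘L .snd ℂ ℂ (ℂ × ℂ)) +
    (w.2.2 : ℂ) • (.snd ℂ ℂ ℂ ∘L .snd ℂ ℂ (ℂ × ℂ))

theorem realForm_apply (w : ℝ × ℝ × ℝ) (p : ℂ × ℂ × ℂ) :
    realForm w p = w.1 * p.1 + w.2.1 * p.2.1 + w.2.2 * p.2.2 :=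
  rfl

theorem continuous_realForm : Continuous realForm := by
  unfold realForm
  fun_prop

theorem norm_realForm_le (w : ℝ × ℝ × ℝ) : ‖realForm w‖ ≤ |w.1| + |w.2.1| + |w.2.2| := by
  refine ContinuousLinearMap.opNorm_le_bound _ (by positivity) fun p => ?_
  calc ‖realForm w p‖ ≤ |w.1| * ‖p.1‖ + |w.2.1| * ‖p.2.1‖ + |w.2.2| * ‖p.2.2‖ := by
        rw [realForm_apply]
        refine norm_add₃_le.trans_eq ?_
        simp only [norm_mul, norm_real, Real.norm_eq_abs]
    _ ≤ |w.1| * ‖p‖ + |w.2.1| * ‖p‖ + |w.2.2| * ‖p‖ := by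
        gcongr
        · exact norm_fst_le p
        · exact (norm_fst_le p.2).trans (norm_snd_le p)
        · exact (norm_snd_le p.2).trans (norm_snd_le p)
    _ = (|w.1| + |w.2.1| + |w.2.2|) * ‖p‖ := by ring

/-- The coefficients of `α`, `β` and `γ` in the logarithm of the Selberg weight
`∏ y_i^α (1-y_i)^β ∏_{i<j} (y_i-y_j)^{2γ}`. -/
def selbergLogs (y : Fin n → ℝ) : ℝ × ℝ × ℝ :=
  (∑ i, Real.log (y i), ∑ i, Real.log (1 - y i),
    ∑ i : Fin n, ∑ j : Fin n, if i < j then 2 * Real.log (y i - y j) else 0)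

theorem measurable_selbergLogs : Measurable (selbergLogs (n := n)) := by
  refine Measurable.prodMk (by fun_prop) <| Measurable.prodMk (by fun_prop) <|
    Finset.measurable_fun_sum _ fun i _ => Finset.measurable_fun_sum _ fun j _ => ?_
  split_ifs <;> fun_prop

theorem selbergLogs_nonpos (hy : y ∈ orderedSimplex n) : selbergLogs y ≤ 0 := by
  simp only [selbergLogs, Prod.le_def, Prod.fst_zero, Prod.snd_zero]
  refine ⟨Finset.sum_nonpos fun i _ => ?_, Finset.sum_nonpos fun i _ => ?_,
    Finset.sum_nonpos fun i _ => Finset.sum_nonpos fun j _ => ?_⟩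
  · exact Real.log_nonpos (hy.1 i).1.le (hy.1 i).2.le
  · exact Real.log_nonpos (sub_nonneg.2 (hy.1 i).2.le) (sub_le_self 1 (hy.1 i).1.le)
  · split_ifs with hij
    · have hsub := sub_mem_Ioo_of_mem_orderedSimplex hy hij
      linarith [Real.log_nonpos hsub.1.le hsub.2.le]
    · exact le_rfl

theorem ofReal_cpow_eq_cexp_log_mul {x : ℝ} (hx : 0 < x) (w : ℂ) :
    (x : ℂ) ^ w = exp (Real.log x * w) := by
  rw [cpow_def_of_ne_zero (ofReal_ne_zero.2 hx.ne'), ofReal_log hx.le]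

theorem selbergIntegrand_eq_mul_cexp (f : (Fin n → ℝ) → ℂ) (p : ℂ × ℂ × ℂ)
    (hy : y ∈ orderedSimplex n) :
    selbergIntegrand n f p.1 p.2.1 p.2.2 y = f y * exp (realForm (selbergLogs y) p) := by
  have hα : ∏ i, (y i : ℂ) ^ p.1 = exp ((selbergLogs y).1 * p.1) := by
    rw [selbergLogs, ofReal_sum, Finset.sum_mul, exp_sum]
    exact Finset.prod_congr rfl fun i _ => ofReal_cpow_eq_cexp_log_mul (hy.1 i).1 _
  have hβ : ∏ i, ((1 - y i : ℝ) : ℂ) ^ p.2.1 = exp ((selbergLogs y).2.1 * p.2.1) := by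
    rw [selbergLogs, ofReal_sum, Finset.sum_mul, exp_sum]
    exact Finset.prod_congr rfl fun i _ => ofReal_cpow_eq_cexp_log_mul (sub_pos.2 (hy.1 i).2) _
  have hγ : (∏ i : Fin n, ∏ j : Fin n,
      if i < j then ((y i - y j : ℝ) : ℂ) ^ (2 * p.2.2) else 1) =
      exp ((selbergLogs y).2.2 * p.2.2) := by
    simp only [selbergLogs, ofReal_sum, Finset.sum_mul, exp_sum]
    refine Finset.prod_congr rfl fun i _ => Finset.prod_congr rfl fun j _ => ?_
    split_ifs with hij
    · rw [ofReal_cpow_eq_cexp_log_mul (sub_mem_Ioo_of_mem_orderedSimplex hy hij).1]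
      push_cast
      ring_nf
    · simp
  rw [selbergIntegrand, Finset.prod_mul_distrib, hα, hβ, hγ, realForm_apply, exp_add, exp_add]
  ring

theorem norm_mul_exp_norm_realForm_le_norm_selbergIntegrand (f : (Fin n → ℝ) → ℂ)
    (p : ℂ × ℂ × ℂ) {r : ℝ} (hr : 0 ≤ r) (hy : y ∈ orderedSimplex n) :
    ‖f y * exp (realForm (selbergLogs y) p)‖ * Real.exp (r * ‖realForm (selbergLogs y)‖) ≤
      ‖selbergIntegrand n f (p.1 - r) (p.2.1 - r) (p.2.2 - r) y‖ := by
  obtain ⟨hα, hβ, hγ⟩ := selbergLogs_nonpos hy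
  set w := selbergLogs y with hw
  have hnorm : ‖realForm w‖ ≤ -(w.1 + w.2.1 + w.2.2) := by
    refine (norm_realForm_le w).trans_eq ?_
    rw [abs_of_nonpos hα, abs_of_nonpos hβ, abs_of_nonpos hγ]
    ring
  have hshift : (realForm w (p.1 - r, p.2.1 - r, p.2.2 - r)).re =
      (realForm w p).re + r * -(w.1 + w.2.1 + w.2.2) := by
    simp only [realForm_apply, add_re, re_ofReal_mul, sub_re, ofReal_re]
    ring
  rw [selbergIntegrand_eq_mul_cexp f (p.1 - r, p.2.1 - r, p.2.2 - r) hy, ← hw, norm_mul, norm_mul,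
    norm_exp, norm_exp, hshift, Real.exp_add, mul_assoc]
  gcongr

end ExponentialForm

section Analyticity

variable {n : ℕ} {s C : ℝ} {f : (Fin n → ℝ) → ℂ} {p : ℂ × ℂ × ℂ}

/-- The domain `{Re α > s - 1, Re β > -1, Re γ > 0}`, which is `domainD` with a real parameter. -/
def selbergDomain (s : ℝ) : Set (ℂ × ℂ × ℂ) :=
  {p | s - 1 < p.1.re ∧ -1 < p.2.1.re ∧ 0 < p.2.2.re}

theorem isOpen_selbergDomain (s : ℝ) : IsOpen (selbergDomain s) := by
  unfold selbergDomain
  exact (isOpen_lt (by fun_prop) (by fun_prop)).and <|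
    (isOpen_lt (by fun_prop) (by fun_prop)).and (isOpen_lt (by fun_prop) (by fun_prop))

theorem exists_pos_sub_mem_selbergDomain (hp : p ∈ selbergDomain s) :
    ∃ r : ℝ≥0, 0 < r ∧ (p.1 - r, p.2.1 - r, p.2.2 - r) ∈ selbergDomain s := by
  have hcont : Continuous fun r : ℝ≥0 => (p.1 - r, p.2.1 - r, p.2.2 - (r : ℂ)) := by fun_prop
  have hnhds : ∀ᶠ r : ℝ≥0 in 𝓝 0, (p.1 - r, p.2.1 - r, p.2.2 - (r : ℂ)) ∈ selbergDomain s :=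
    hcont.continuousAt.eventually_mem <| (isOpen_selbergDomain s).mem_nhds (by simpa using hp)
  obtain ⟨r, hr, hr0⟩ :=
    ((hnhds.filter_mono nhdsWithin_le_nhds).and (self_mem_nhdsWithin (s := Set.Ioi 0))).exists
  exact ⟨r, hr0, hr⟩

theorem analyticAt_selbergS (hf : AEStronglyMeasurable f (volume.restrict (orderedSimplex n)))
    (hfC : ∀ y ∈ orderedSimplex n, ‖f y‖ ≤ C * ∏ i, y i ^ (-s)) (hp : p ∈ selbergDomain s) :
    AnalyticAt ℂ (fun q : ℂ × ℂ × ℂ => selbergS n f q.1 q.2.1 q.2.2) p := by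
  obtain ⟨r, hr, hα, hβ, hγ⟩ := exists_pos_sub_mem_selbergDomain hp
  have hL : AEStronglyMeasurable (fun y : Fin n → ℝ => realForm (selbergLogs y))
      (volume.restrict (orderedSimplex n)) :=
    continuous_realForm.comp_aestronglyMeasurable measurable_selbergLogs.aestronglyMeasurable
  have hexp (q : ℂ × ℂ × ℂ) : selbergS n f q.1 q.2.1 q.2.2 =
      ∫ y in orderedSimplex n, f y * exp (realForm (selbergLogs y) q) :=
    setIntegral_congr_fun (measurableSet_orderedSimplex n)
      fun y hy => selbergIntegrand_eq_mul_cexp f q hy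
  simp only [hexp]
  refine analyticAt_integral_mul_cexp hr hf hL ?_
  refine (integrableOn_selbergIntegrand hf hfC hα hβ hγ.le).norm.mono' ?_ ?_
  · exact (hf.mul (aestronglyMeasurable_cexp_apply hL p)).norm.mul
      (Real.continuous_exp.comp_aestronglyMeasurable (hL.norm.const_mul (r : ℝ)))
  · filter_upwards [ae_restrict_mem (measurableSet_orderedSimplex n)] with y hy
    rw [Real.norm_of_nonneg (by positivity)]
    exact norm_mul_exp_norm_realForm_le_norm_selbergIntegrand f p r.coe_nonneg hy

end Analyticity

section Laurent

variable {n : ℕ}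

theorem measurable_laurentEval (c : (Fin n → ℤ) →₀ ℂ) : Measurable (laurentEval c) := by
  unfold laurentEval Finsupp.sum
  fun_prop

theorem norm_laurentEval_le {d : ℕ} {c : (Fin n → ℤ) →₀ ℂ}
    (hd : ∀ k ∈ c.support, ∀ i, -(d : ℤ) ≤ k i) {y : Fin n → ℝ} (hy : y ∈ orderedSimplex n) :
    ‖laurentEval c y‖ ≤ (∑ k ∈ c.support, ‖c k‖) * ∏ i, y i ^ (-(d : ℝ)) := by
  rw [laurentEval, Finsupp.sum, Finset.sum_mul]
  refine norm_sum_le_of_le _ fun k hk => ?_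
  rw [norm_mul, norm_prod]
  gcongr with i
  obtain ⟨hpos, hlt⟩ := hy.1 i
  calc ‖(y i : ℂ) ^ k i‖ = y i ^ k i := by
        rw [norm_zpow, norm_real, Real.norm_of_nonneg hpos.le]
    _ ≤ y i ^ (-(d : ℤ)) := zpow_le_zpow_right_of_le_one₀ hpos hlt.le (hd k hk i)
    _ = y i ^ (-(d : ℝ)) := by rw [← Real.rpow_intCast]; push_cast; rfl

end Laurent

theorem selberg_integral_analyticOn_domainD_general {n : ℕ} {s C : ℝ} {f : (Fin n → ℝ) → ℂ}
    (hf : AEStronglyMeasurable f (volume.restrict (orderedSimplex n)))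
    (hfC : ∀ y ∈ orderedSimplex n, ‖f y‖ ≤ C * ∏ i, y i ^ (-s)) :
    (∀ p ∈ selbergDomain s,
      IntegrableOn (selbergIntegrand n f p.1 p.2.1 p.2.2) (orderedSimplex n) volume) ∧
    AnalyticOnNhd ℂ
      (fun p : ℂ × ℂ × ℂ => selbergS n f p.1 p.2.1 p.2.2) (selbergDomain s) :=
  ⟨fun _ ⟨hα, hβ, hγ⟩ => integrableOn_selbergIntegrand hf hfC hα hβ hγ.le,
    fun _ hp => analyticAt_selbergS hf hfC hp⟩

/-- For a Laurent polynomial `f` such that `(y_1⋯y_n)^d · f` is a polynomial, the Selberg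
integral `S_n[f]` converges absolutely on `D_d` and is an analytic function of `(α,β,γ)`
there. -/
theorem selberg_integral_analyticOn_domainD (n d : ℕ) (hn : 1 ≤ n)
    (c : (Fin n → ℤ) →₀ ℂ) (hd : ∀ k ∈ c.support, ∀ i, -(d : ℤ) ≤ k i) :
    (∀ p ∈ domainD d,
      IntegrableOn (selbergIntegrand n (laurentEval c) p.1 p.2.1 p.2.2)
        (orderedSimplex n) volume) ∧
    AnalyticOnNhd ℂ
      (fun p : ℂ × ℂ × ℂ => selbergS n (laurentEval c) p.1 p.2.1 p.2.2) (domainD d) :=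
  selberg_integral_analyticOn_domainD_general (measurable_laurentEval c).aestronglyMeasurable
    fun _ hy => norm_laurentEval_le hd hy

end
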